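/- Let G₁ be a separable metric space, G₂ a metric space, (E, ℰ) a measurable space and F a measure on (E, ℰ). Let B ⊆ G₁ be any subset, C ⊆ G₂ a closed subset, and let δ : G₁ × E → G₂ be a measurable map such that δ(·, x) : G₁ → G₂ is continuous for every x ∈ E. If for every h ∈ B one has δ(h,x) ∈ C for F-almost all x ∈ E, then there is a single F-null set N ∈ ℰ such that for every x ∈ E ∖ N one has δ(h,x) ∈ C for all h ∈ B. -/

import Mathlib

open MeasureTheory

theorem stmt_3
    {G₁ G₂ E : Type*}
    [MetricSpace G₁] [TopologicalSpace.SeparableSpace G₁]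
    [MeasurableSpace G₁] [BorelSpace G₁]
    [MetricSpace G₂] [MeasurableSpace G₂] [BorelSpace G₂]
    [MeasurableSpace E] (F : Measure E)
    (B : Set G₁) (C : Set G₂) (hC : IsClosed C)
    (δ : G₁ → E → G₂)
    (hδmeas : Measurable (Function.uncurry δ))
    (hδcont : ∀ x : E, Continuous fun h => δ h x)
    (hae : ∀ h ∈ B, ∀ᵐ x ∂F, δ h x ∈ C) :
    ∃ N : Set E, MeasurableSet N ∧ F N = 0 ∧ ∀ x ∉ N, ∀ h ∈ B, δ h x ∈ C := by
  obtain ⟨c, hcB, hcc, hBc⟩ :=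
    (TopologicalSpace.IsSeparable.of_separableSpace B).exists_countable_dense_subset
  have h1 : ∀ᵐ x ∂F, ∀ h ∈ c, δ h x ∈ C :=
    (ae_ball_iff hcc).2 fun h hh => hae h (hcB hh)
  refine ⟨toMeasurable F {x | ¬ ∀ h ∈ c, δ h x ∈ C}, measurableSet_toMeasurable _ _, ?_, ?_⟩
  · rw [measure_toMeasurable]
    exact ae_iff.1 h1
  · intro x hx h hh
    have h2 : ∀ h ∈ c, δ h x ∈ C := by
      by_contra hcon
      exact hx (subset_toMeasurable F _ hcon)
    have h3 : closure c ⊆ (fun h => δ h x) ⁻¹' C :=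
      closure_minimal h2 (hC.preimage (hδcont x))
    exact h3 (hBc hh)
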